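/- Let d ≥ 1 and α ∈ (0,1). There exists C > 0 depending only on d and α such that every g : ℝ × ℝ^d × ℝ^d → ℝ which is C¹ in (t,x), C² in v, and has [g]_{C_ℓ^{2+α}} < ∞ satisfies, for every z₀ ∈ ℝ × ℝ^d × ℝ^d, ‖g‖_{L^∞(Q₁(z₀))} + [g]_{C_ℓ^{2+α}(Q₁(z₀))} ≤ C ([∂_t g + v·∇_x g]_{C_ℓ^α(Q₂(z₀))} + Σ_{i,j} [∂²_{v_i v_j} g]_{C_ℓ^α(Q₂(z₀))} + ‖g‖_{L^∞(Q₂(z₀))}). -/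

import Mathlib

open Real MeasureTheory
open scoped BigOperators ENNReal

noncomputable section

abbrev E (d : ℕ) := EuclideanSpace ℝ (Fin d)
abbrev Z (d : ℕ) := ℝ × E d × E d

variable {d : ℕ}

/-- The kinetic cylinder `Q_r(z₀)`. -/
def kCyl (r : ℝ) (z₀ : Z d) : Set (Z d) :=
  {z | z₀.1 - r ^ 2 < z.1 ∧ z.1 ≤ z₀.1 ∧
    ‖z.2.1 - z₀.2.1 - (z.1 - z₀.1) • z₀.2.2‖ < r ^ 3 ∧ ‖z.2.2 - z₀.2.2‖ < r}

/-- Partial derivative in time. -/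
def pt (g : Z d → ℝ) (z : Z d) : ℝ := deriv (fun s => g (s, z.2.1, z.2.2)) z.1

/-- Partial derivative in the direction `x i`. -/
def px (g : Z d → ℝ) (i : Fin d) (z : Z d) : ℝ :=
  deriv (fun s : ℝ => g (z.1, z.2.1 + s • EuclideanSpace.single i (1 : ℝ), z.2.2)) 0

/-- Partial derivative in the direction `v i`. -/
def pv (g : Z d → ℝ) (i : Fin d) (z : Z d) : ℝ :=
  deriv (fun s : ℝ => g (z.1, z.2.1, z.2.2 + s • EuclideanSpace.single i (1 : ℝ))) 0

/-- Second partial derivative in `v i`, `v j`. -/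
def pvv (g : Z d → ℝ) (i j : Fin d) : Z d → ℝ := pv (pv g j) i

/-- Transport derivative `∂_t g + v ⋅ ∇_x g`. -/
def Yop (g : Z d → ℝ) (z : Z d) : ℝ := pt g z + ∑ i, z.2.2 i * px g i z

/-- Euclidean norm of the velocity gradient `∇_v g`. -/
def gradvNorm (g : Z d → ℝ) (z : Z d) : ℝ := Real.sqrt (∑ i, (pv g i z) ^ 2)

/-- (Frobenius) norm of the velocity Hessian `D²_v g`. -/
def hessvNorm (g : Z d → ℝ) (z : Z d) : ℝ := Real.sqrt (∑ i, ∑ j, (pvv g i j z) ^ 2)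

/-- `g` is `C¹` in `(t,x)` and `C²` in `v` on `Q`, with continuous partial derivatives. -/
structure KinReg (g : Z d → ℝ) (Q : Set (Z d)) : Prop where
  cont : ContinuousOn g Q
  dt : ∀ z ∈ Q, DifferentiableAt ℝ (fun s => g (s, z.2.1, z.2.2)) z.1
  dx : ∀ z ∈ Q, ∀ i, DifferentiableAt ℝ
    (fun s : ℝ => g (z.1, z.2.1 + s • EuclideanSpace.single i (1 : ℝ), z.2.2)) 0
  dv : ∀ z ∈ Q, ∀ i, DifferentiableAt ℝ
    (fun s : ℝ => g (z.1, z.2.1, z.2.2 + s • EuclideanSpace.single i (1 : ℝ))) 0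
  dvv : ∀ z ∈ Q, ∀ i j, DifferentiableAt ℝ
    (fun s : ℝ => pv g j (z.1, z.2.1, z.2.2 + s • EuclideanSpace.single i (1 : ℝ))) 0
  ptc : ContinuousOn (pt g) Q
  pxc : ∀ i, ContinuousOn (px g i) Q
  pvc : ∀ i, ContinuousOn (pv g i) Q
  pvvc : ∀ i j, ContinuousOn (pvv g i j) Q

/-- Sup norm (in `ℝ≥0∞`) of `h` over the set `Q`. -/
def supAbs (Q : Set (Z d)) (h : Z d → ℝ) : ℝ≥0∞ := ⨆ z ∈ Q, ENNReal.ofReal |h z|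

/-- Kinetic Hölder seminorm of exponent `β` on `Q`. -/
def kHolder (β : ℝ) (Q : Set (Z d)) (h : Z d → ℝ) : ℝ≥0∞ :=
  ⨆ (z₀ ∈ Q) (r : ℝ) (_ : 0 < r) (_ : kCyl r z₀ ⊆ Q) (z ∈ kCyl r z₀),
    ENNReal.ofReal (|h z - h z₀| / r ^ β)

/-- Polynomial of kinetic degree at most 2. -/
def kpoly (a b : ℝ) (q : Fin d → ℝ) (M : Matrix (Fin d) (Fin d) ℝ) (z : Z d) : ℝ :=
  a + b * z.1 + ∑ i, q i * z.2.2 i + (1 / 2) * ∑ i, ∑ j, M i j * z.2.2 i * z.2.2 j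

/-- Kinetic Hölder seminorm of order `2 + α` on `Q`, by approximation with polynomials of
kinetic degree at most 2. -/
def kSemi2 (α : ℝ) (Q : Set (Z d)) (g : Z d → ℝ) : ℝ≥0∞ :=
  ⨆ (z₀ ∈ Q) (r : ℝ) (_ : 0 < r) (_ : kCyl r z₀ ⊆ Q),
    (⨅ (a : ℝ) (b : ℝ) (q : Fin d → ℝ) (M : Matrix (Fin d) (Fin d) ℝ),
      ⨆ z ∈ kCyl r z₀, ENNReal.ofReal |g z - kpoly a b q M z|)
      / ENNReal.ofReal (r ^ (2 + α))

/-- Directional derivative field. -/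
def DirD {V : Type*} [NormedAddCommGroup V] [NormedSpace ℝ V] (f : V → ℝ) (u : V) (D : V → ℝ) : Prop :=
  ∀ z, HasDerivAt (fun s : ℝ => f (z + s • u)) (D z) 0

section gen
variable {V : Type*} [NormedAddCommGroup V] [NormedSpace ℝ V]

lemma DirD.shift {f : V → ℝ} {u : V} {D : V → ℝ} (h : DirD f u D) (z : V) (s : ℝ) :
    HasDerivAt (fun s : ℝ => f (z + s • u)) (D (z + s • u)) s := by
  have h1 := h (z + s • u)
  have h2 : HasDerivAt (fun x : ℝ => x - s) 1 s := (hasDerivAt_id s).sub_const s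
  have h3 := HasDerivAt.comp (h₂ := fun s' : ℝ => f (z + s • u + s' • u)) (h := fun x : ℝ => x - s)
    (h₂' := D (z + s • u)) s (by simpa using h1) h2
  rw [mul_one] at h3
  refine h3.congr_of_eventuallyEq (Filter.Eventually.of_forall fun x => ?_)
  simp only [Function.comp]
  congr 1
  rw [add_assoc, ← add_smul]; congr 2; ring

lemma DirD.smul {f : V → ℝ} {u : V} {D : V → ℝ} (h : DirD f u D) (c : ℝ) :
    DirD f (c • u) (fun z => c * D z) := by
  intro z
  have h2 : HasDerivAt (fun x : ℝ => x * c) c 0 := by simpa using (hasDerivAt_id (0:ℝ)).mul_const c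
  have h3 := HasDerivAt.comp (h₂ := fun s' : ℝ => f (z + s' • u)) (h := fun x : ℝ => x * c)
    (h₂' := D z) 0 (by simpa using h z) h2
  rw [mul_comm] at h3
  refine h3.congr_of_eventuallyEq (Filter.Eventually.of_forall fun x => ?_)
  simp only [Function.comp, smul_smul]

lemma DirD.first {f : V → ℝ} {u : V} {D : V → ℝ} (h : DirD f u D) (z : V) (s b ε : ℝ)
    (hb : ∀ θ ∈ Set.uIcc 0 s, |D (z + θ • u) - b| ≤ ε) :
    |f (z + s • u) - f z - s * b| ≤ ε * |s| := by
  have key := Convex.norm_image_sub_le_of_norm_hasDerivWithin_le (𝕜 := ℝ) (s := Set.uIcc 0 s)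
    (f := fun s : ℝ => f (z + s • u) - s * b) (f' := fun θ => D (z + θ • u) - b) (x := 0) (y := s) (C := ε)
    (fun θ _ => by
      have := (h.shift z θ).sub ((hasDerivAt_id θ).mul_const b)
      simp only [id, one_mul] at this
      exact this.hasDerivWithinAt)
    (fun θ hθ => by simpa using hb θ hθ) (convex_uIcc 0 s) Set.left_mem_uIcc Set.right_mem_uIcc
  simp only [Real.norm_eq_abs, zero_smul, add_zero, zero_mul, sub_zero] at key
  convert key using 2
  ring

lemma DirD.add {f : V → ℝ} {u v : V} {D D' : V → ℝ} (h : DirD f u D) (h' : DirD f v D')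
    (hc : Continuous D') : DirD f (u + v) (fun z => D z + D' z) := by
  intro z
  have e : (fun s : ℝ => f (z + s • (u + v))) =
      fun s => f (z + s • u) + (f (z + s • u + s • v) - f (z + s • u)) := by
    funext s; rw [smul_add, add_assoc]; ring
  rw [e]
  refine (h z).add ?_
  rw [hasDerivAt_iff_isLittleO, Asymptotics.isLittleO_iff]
  intro c hcpos
  have hcont : Continuous (fun p : ℝ × ℝ => D' (z + p.1 • u + p.2 • v)) := by fun_prop
  have hc0 := Metric.continuousAt_iff.1 (hcont.continuousAt (x := (0,0))) c hcpos
  obtain ⟨δ, hδ, H⟩ := hc0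
  filter_upwards [Metric.ball_mem_nhds (0:ℝ) hδ] with s hs
  have := h'.first (z + s • u) s (D' z) c (by
    intro θ hθ
    have := @H (s, θ) (by
      rw [Prod.dist_eq]
      simp only [Metric.mem_ball, dist_zero_right] at hs
      simp only [dist_zero_right]
      refine max_lt hs (lt_of_le_of_lt ?_ hs)
      have := Set.abs_sub_left_of_mem_uIcc hθ
      simpa using this)
    simpa [Real.dist_eq] using this.le)
  simpa using this

lemma DirD.zero (f : V → ℝ) : DirD f 0 (fun _ => 0) := by
  intro z; simpa using hasDerivAt_const (0:ℝ) (f z)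

lemma DirD.sum {ι : Type*} {f : V → ℝ} (S : Finset ι) {u : ι → V} {D : ι → V → ℝ}
    (h : ∀ i, DirD f (u i) (D i)) (hc : ∀ i, Continuous (D i)) :
    DirD f (∑ i ∈ S, u i) (fun z => ∑ i ∈ S, D i z) := by
  classical
  induction S using Finset.induction_on with
  | empty => simpa using DirD.zero f
  | insert a S ha ih =>
    simp only [Finset.sum_insert ha]
    exact (h a).add ih (continuous_finsetSum _ fun i _ => hc i)

lemma DirD.second {f : V → ℝ} {u : V} {D D2 : V → ℝ} (h : DirD f u D) (h2 : DirD D u D2)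
    (z : V) (m ε : ℝ) (hb : ∀ θ ∈ Set.Icc (0:ℝ) 1, |D2 (z + θ • u) - m| ≤ ε) :
    |f (z + u) - f z - D z - 1 / 2 * m| ≤ ε := by
  have hε : 0 ≤ ε := (abs_nonneg _).trans (hb 0 (by simp))
  have key := Convex.norm_image_sub_le_of_norm_hasDerivWithin_le (𝕜 := ℝ) (s := Set.Icc 0 1)
    (f := fun s : ℝ => f (z + s • u) - s * D z - s ^ 2 * (1 / 2 * m))
    (f' := fun θ => D (z + θ • u) - D z - θ * m) (x := 0) (y := 1) (C := ε)
    (fun θ _ => by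
      have := ((h.shift z θ).sub ((hasDerivAt_id θ).mul_const (D z))).sub
        ((hasDerivAt_pow 2 θ).mul_const (1 / 2 * m))
      refine HasDerivAt.hasDerivWithinAt ?_
      have e : D (z + θ • u) - D z - θ * m
          = D (z + θ • u) - 1 * D z - ((2:ℕ):ℝ) * θ ^ (2 - 1) * (1 / 2 * m) := by
        push_cast; ring
      rw [e]
      exact this)
    (fun θ hθ => by
      have := h2.first z θ m ε (fun η hη => hb η (by
        rw [Set.uIcc_of_le hθ.1] at hη
        exact ⟨hη.1, hη.2.trans hθ.2⟩))
      rw [Real.norm_eq_abs]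
      refine this.trans ?_
      rw [abs_of_nonneg hθ.1]
      nlinarith [hθ.2])
    (convex_Icc 0 1) (by simp) (by simp)
  simp only [Real.norm_eq_abs] at key
  simp at key
  convert key using 2
  ring
end gen

lemma single_sum (w : E d) : (∑ i, w i • EuclideanSpace.single i (1 : ℝ)) = w := by
  ext j
  simp [Finset.sum_apply, Pi.single_apply]

lemma KinReg.vdir {g : Z d → ℝ} (h : KinReg g Set.univ) (w : E d) :
    DirD g (0, 0, w) (fun z => ∑ i, w i * pv g i z) := by
  have h1 : ∀ i, DirD g (w i • ((0, 0, EuclideanSpace.single i (1 : ℝ)) : Z d))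
      (fun z => w i * pv g i z) := fun i => DirD.smul (fun z => by
        have := (h.dv z trivial i).hasDerivAt
        refine this.congr_of_eventuallyEq (Filter.Eventually.of_forall fun s => ?_)
        refine congrArg _ (Prod.ext ?_ (Prod.ext ?_ ?_)) <;> simp) _
  have h2 := DirD.sum Finset.univ h1
    (fun i => continuous_const.mul (continuousOn_univ.1 (h.pvc i)))
  convert h2 using 1
  refine Prod.ext ?_ (Prod.ext ?_ ?_)
  · simp [Prod.fst_sum]
  · simp [Prod.fst_sum, Prod.snd_sum]
  · simp only [Prod.snd_sum, Prod.smul_snd]; exact (single_sum w).symm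

lemma KinReg.vdir2 {g : Z d → ℝ} (h : KinReg g Set.univ) (w : E d) :
    DirD (fun z => ∑ j, w j * pv g j z) (0, 0, w)
      (fun z => ∑ j, w j * ∑ i, w i * pvv g i j z) := by
  have h0 : ∀ j, DirD (pv g j) (0, 0, w) (fun z => ∑ i, w i * pvv g i j z) := by
    intro j
    have h1 : ∀ i, DirD (pv g j) (w i • ((0, 0, EuclideanSpace.single i (1 : ℝ)) : Z d))
        (fun z => w i * pvv g i j z) := fun i => DirD.smul (fun z => by
          have := (h.dvv z trivial i j).hasDerivAt
          refine this.congr_of_eventuallyEq (Filter.Eventually.of_forall fun s => ?_)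
          refine congrArg _ (Prod.ext ?_ (Prod.ext ?_ ?_)) <;> simp) _
    have h2 := DirD.sum Finset.univ h1
      (fun i => continuous_const.mul (continuousOn_univ.1 (h.pvvc i j)))
    convert h2 using 1
    refine Prod.ext ?_ (Prod.ext ?_ ?_)
    · simp [Prod.fst_sum]
    · simp [Prod.fst_sum, Prod.snd_sum]
    · simp only [Prod.snd_sum, Prod.smul_snd]; exact (single_sum w).symm
  intro z
  exact HasDerivAt.fun_sum (fun j _ => (h0 j z).const_mul (w j))

lemma KinReg.ydir {g : Z d → ℝ} (h : KinReg g Set.univ) (v : E d) :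
    DirD g (1, v, 0) (fun z => pt g z + ∑ i, v i * px g i z) := by
  have h1 : ∀ i, DirD g (v i • ((0, EuclideanSpace.single i (1 : ℝ), 0) : Z d))
      (fun z => v i * px g i z) := fun i => DirD.smul (fun z => by
        have := (h.dx z trivial i).hasDerivAt
        refine this.congr_of_eventuallyEq (Filter.Eventually.of_forall fun s => ?_)
        refine congrArg _ (Prod.ext ?_ (Prod.ext ?_ ?_)) <;> simp) _
  have hcx : ∀ i, Continuous (fun z => v i * px g i z) :=
    fun i => continuous_const.mul (continuousOn_univ.1 (h.pxc i))
  have h2 := DirD.sum Finset.univ h1 hcx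
  have h3 : DirD g ((1, 0, 0) : Z d) (pt g) := fun z => by
    have h4 := (h.dt z trivial).hasDerivAt
    have h5 : HasDerivAt (fun s : ℝ => z.1 + s) 1 0 := (hasDerivAt_id (0:ℝ)).const_add _
    have h6 := HasDerivAt.comp (h₂ := fun s => g (s, z.2.1, z.2.2)) (h := fun s : ℝ => z.1 + s)
      (h₂' := pt g z) 0 (by simpa [pt] using h4) h5
    rw [mul_one] at h6
    refine h6.congr_of_eventuallyEq (Filter.Eventually.of_forall fun x => ?_)
    simp only [Function.comp]
    congr 1
    refine Prod.ext ?_ (Prod.ext ?_ ?_) <;> simp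
  have h7 := h3.add h2 (continuous_finsetSum _ fun i _ => hcx i)
  convert h7 using 1
  refine Prod.ext ?_ (Prod.ext ?_ ?_)
  · simp [Prod.fst_sum]
  · simp only [Prod.snd_add, Prod.fst_add, Prod.snd_sum, Prod.fst_sum, Prod.smul_snd, Prod.smul_fst, zero_add]
    exact (single_sum v).symm
  · simp [Prod.snd_sum]

lemma ystep {g : Z d → ℝ} (h : KinReg g Set.univ) (t : ℝ) (x v : E d) (s b ε : ℝ)
    (hb : ∀ θ ∈ Set.uIcc 0 s, |Yop g (t + θ, x + θ • v, v) - b| ≤ ε) :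
    |g (t + s, x + s • v, v) - g (t, x, v) - s * b| ≤ ε * |s| := by
  have := (h.ydir v).first (t, x, v) s b ε (fun θ hθ => by
    have := hb θ hθ
    simpa [Yop] using this)
  simpa using this

lemma vstep {g : Z d → ℝ} (h : KinReg g Set.univ) (t : ℝ) (x v w : E d)
    (M : Fin d → Fin d → ℝ) (ε : ℝ)
    (hb : ∀ θ ∈ Set.Icc (0:ℝ) 1, ∑ i, ∑ j, |pvv g i j (t, x, v + θ • w) - M i j| ≤ ε) :
    |g (t, x, v + w) - g (t, x, v) - ∑ i, w i * pv g i (t, x, v)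
      - 1 / 2 * ∑ i, ∑ j, M i j * w i * w j| ≤ ε * ‖w‖ ^ 2 := by
  have := (h.vdir w).second (h.vdir2 w) (t, x, v) (∑ i, ∑ j, M i j * w i * w j) (ε * ‖w‖ ^ 2)
    (fun θ hθ => by
      have h1 := hb θ hθ
      simp only [Finset.mul_sum]
      rw [Finset.sum_comm, ← Finset.sum_sub_distrib]
      simp_rw [← Finset.sum_sub_distrib]
      refine (Finset.abs_sum_le_sum_abs _ _).trans ?_
      refine le_trans ?_ (mul_le_mul_of_nonneg_right h1 (sq_nonneg _))
      rw [Finset.sum_mul]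
      refine Finset.sum_le_sum fun i _ => (Finset.abs_sum_le_sum_abs _ _).trans ?_
      rw [Finset.sum_mul]
      refine Finset.sum_le_sum fun j _ => ?_
      have e : w j * (w i * pvv g i j ((t, x, v) + θ • ((0, 0, w) : Z d))) - M i j * w i * w j
          = (pvv g i j (t, x, v + θ • w) - M i j) * (w i * w j) := by
        simp; ring
      rw [e, abs_mul, abs_mul, pow_two]
      have hi : ∀ i, |w i| ≤ ‖w‖ := fun i => by
        simpa using PiLp.norm_apply_le w i
      exact mul_le_mul_of_nonneg_left
        (mul_le_mul (hi i) (hi j) (abs_nonneg _) (norm_nonneg _)) (abs_nonneg _))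
  simpa using this
/-- `g` in Galilean coordinates at `zs`. -/
def gal (zs : Z d) (τ : ℝ) (y u : E d) : Z d := (zs.1 + τ, zs.2.1 + y + τ • zs.2.2, zs.2.2 + u)

lemma gal_mem {zs : Z d} {ρ τ : ℝ} {y u : E d} :
    gal zs τ y u ∈ kCyl ρ zs ↔ -ρ ^ 2 < τ ∧ τ ≤ 0 ∧ ‖y‖ < ρ ^ 3 ∧ ‖u‖ < ρ := by
  simp only [gal, kCyl, Set.mem_ofPred_eq]
  have e : zs.2.1 + y + τ • zs.2.2 - zs.2.1 - (zs.1 + τ - zs.1) • zs.2.2 = y := by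
    rw [add_sub_cancel_left]; abel
  rw [e, add_sub_cancel_left]
  constructor
  · rintro ⟨h1, h2, h3, h4⟩; exact ⟨by linarith, by linarith, h3, h4⟩
  · rintro ⟨h1, h2, h3, h4⟩; exact ⟨by linarith, by linarith, h3, h4⟩

lemma gal_surj (zs z : Z d) :
    z = gal zs (z.1 - zs.1) (z.2.1 - zs.2.1 - (z.1 - zs.1) • zs.2.2) (z.2.2 - zs.2.2) := by
  refine Prod.ext ?_ (Prod.ext ?_ ?_) <;> simp only [gal] <;> abel

/-- oscillation bound of the top order derivatives. -/
def LocBd (g : Z d → ℝ) (zs : Z d) (ρ ε : ℝ) : Prop :=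
  ∀ z ∈ kCyl ρ zs, |Yop g z - Yop g zs| ≤ ε ∧ ∑ i, ∑ j, |pvv g i j z - pvv g i j zs| ≤ ε

lemma Fy {g : Z d → ℝ} (h : KinReg g Set.univ) {zs : Z d} {ρ ε : ℝ} (hL : LocBd g zs ρ ε)
    {τ s : ℝ} {y u : E d} (h1 : gal zs τ y u ∈ kCyl ρ zs)
    (h2 : gal zs (τ + s) (y + s • u) u ∈ kCyl ρ zs) :
    |g (gal zs (τ + s) (y + s • u) u) - g (gal zs τ y u) - s * Yop g zs| ≤ ε * |s| := by
  have key := ystep h (zs.1 + τ) (zs.2.1 + y + τ • zs.2.2) (zs.2.2 + u) s (Yop g zs) ε ?_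
  · have e : ((zs.1 + τ + s, zs.2.1 + y + τ • zs.2.2 + s • (zs.2.2 + u), zs.2.2 + u) : Z d)
        = gal zs (τ + s) (y + s • u) u := by
      refine Prod.ext ?_ (Prod.ext ?_ ?_)
      · simp [gal]; ring
      · simp only [gal]; module
      · simp [gal]
    rw [e] at key
    exact key
  · intro θ hθ
    have e : ((zs.1 + τ + θ, zs.2.1 + y + τ • zs.2.2 + θ • (zs.2.2 + u), zs.2.2 + u) : Z d)
        = gal zs (τ + θ) (y + θ • u) u := by
      refine Prod.ext ?_ (Prod.ext ?_ ?_)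
      · simp [gal]; ring
      · simp only [gal]; module
      · simp [gal]
    rw [e]
    refine (hL _ ?_).1
    rw [gal_mem] at *
    have hy : y + θ • u ∈ Metric.ball (0 : E d) (ρ ^ 3) := by
      have hc : Convex ℝ ((fun θ : ℝ => y + θ • u) ⁻¹' Metric.ball (0 : E d) (ρ ^ 3)) := by
        intro a ha b hb p q hp hq hpq
        have := (convex_ball (0 : E d) (ρ ^ 3)) ha hb hp hq hpq
        simp only [Set.mem_preimage]
        convert this using 1
        have : y = (p + q) • y := by rw [hpq, one_smul]
        nth_rewrite 1 [this]
        simp only [smul_eq_mul]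
        module
      rw [← segment_eq_uIcc] at hθ
      exact hc.segment_subset (by simpa using h1.2.2.1) (by simpa using h2.2.2.1) hθ
    have hy' : ‖y + θ • u‖ < ρ ^ 3 := by simpa using hy
    refine ⟨?_, ?_, hy', h1.2.2.2⟩
    · rcases Set.mem_uIcc.1 hθ with hh | hh <;> linarith [h1.1, h2.1]
    · rcases Set.mem_uIcc.1 hθ with hh | hh <;> linarith [h1.2.1, h2.2.1]

lemma Fv {g : Z d → ℝ} (h : KinReg g Set.univ) {zs : Z d} {ρ ε : ℝ} (hL : LocBd g zs ρ ε)
    {τ : ℝ} {y w : E d} (h2 : gal zs τ y w ∈ kCyl ρ zs) :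
    |g (gal zs τ y w) - g (gal zs τ y 0) - ∑ i, w i * pv g i (gal zs τ y 0)
      - 1 / 2 * ∑ i, ∑ j, pvv g i j zs * w i * w j| ≤ ε * ‖w‖ ^ 2 := by
  have key := vstep h (zs.1 + τ) (zs.2.1 + y + τ • zs.2.2) (zs.2.2) w (fun i j => pvv g i j zs) ε ?_
  · simpa [gal] using key
  · intro θ hθ
    refine (hL (gal zs τ y (θ • w)) ?_).2
    rw [gal_mem] at *
    refine ⟨h2.1, h2.2.1, h2.2.2.1, lt_of_le_of_lt ?_ h2.2.2.2⟩
    rw [norm_smul, Real.norm_eq_abs, abs_of_nonneg hθ.1]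
    exact mul_le_of_le_one_left (norm_nonneg _) hθ.2

lemma Fpath {g : Z d → ℝ} (h : KinReg g Set.univ) {zs : Z d} {ρ ε : ℝ} (hL : LocBd g zs ρ ε)
    {τ s : ℝ} {w : E d} (hτ : τ ≤ 0) (hs : s ≤ 0) (hτs : -ρ ^ 2 < τ + s)
    (hw : ‖w‖ < ρ) (hsw : ‖s • w‖ < ρ ^ 3) :
    |g (gal zs τ (s • w) 0) - g (gal zs τ 0 0) - (∑ i, w i * pv g i (gal zs τ 0 0)
      - ∑ i, w i * pv g i (gal zs (τ + s) (s • w) 0))| ≤ ε * (2 * ‖w‖ ^ 2 + 2 * |s|) := by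
  have hρ : 0 < ρ := (norm_nonneg _).trans_lt hw
  have hρ3 : 0 < ρ ^ 3 := by positivity
  have a1 := Fv h hL (τ := τ) (y := 0) (w := w) (gal_mem.2 ⟨by linarith, hτ, by simpa, hw⟩)
  have a2 := Fy h hL (τ := τ) (y := 0) (u := w) (s := s) (gal_mem.2 ⟨by linarith, hτ, by simpa, hw⟩)
    (gal_mem.2 ⟨by linarith, by linarith, by simpa, hw⟩)
  have a3 := Fv h hL (τ := τ + s) (y := s • w) (w := w)
    (gal_mem.2 ⟨by linarith, by linarith, by simpa, hw⟩)
  have a4 := Fy h hL (τ := τ) (y := s • w) (u := 0) (s := s)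
    (gal_mem.2 ⟨by linarith, hτ, hsw, by simpa⟩)
    (gal_mem.2 ⟨by linarith, by linarith, by simpa, by simpa⟩)
  rw [zero_add] at a2
  rw [smul_zero, add_zero] at a4
  rw [abs_le] at *
  constructor <;> linarith [a1.1, a1.2, a2.1, a2.2, a3.1, a3.2, a4.1, a4.2]

lemma second_diff {g : Z d → ℝ} (h : KinReg g Set.univ) {zs : Z d} {r ε : ℝ} (hr : 0 < r)
    (hL : LocBd g zs (3 * r) ε) {y : E d} (hy : ‖y‖ ≤ r ^ 3) :
    |g (gal zs 0 y 0) + g (gal zs 0 (-y) 0) - 2 * g (gal zs 0 0 0)| ≤ 36 * ε * r ^ 2 := by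
  have hε : 0 ≤ ε := (abs_nonneg _).trans (hL (gal zs 0 0 0) (gal_mem.2
    ⟨by nlinarith, le_rfl, by rw [norm_zero]; positivity, by rw [norm_zero]; positivity⟩)).1
  have hr2 : 0 < r ^ 2 := by positivity
  have hr3 : 0 < r ^ 3 := by positivity
  set s : ℝ := - r ^ 2 with hs
  set w : E d := s⁻¹ • y with hwdef
  have hs0 : s ≠ 0 := by rw [hs]; exact neg_ne_zero.2 hr2.ne'
  have hsw : s • w = y := by rw [hwdef, smul_smul, mul_inv_cancel₀ hs0, one_smul]
  have habs : |s| = r ^ 2 := by rw [hs, abs_neg, abs_of_pos hr2]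
  have hw : ‖w‖ ≤ r := by
    rw [hwdef, norm_smul, norm_inv, Real.norm_eq_abs, habs, inv_mul_le_iff₀ hr2]
    linarith [show r ^ 2 * r = r ^ 3 by ring]
  have hw2 : ‖w‖ ^ 2 ≤ r ^ 2 := pow_le_pow_left₀ (norm_nonneg _) hw 2
  have q2 : (3 * r) ^ 2 = 9 * r ^ 2 := by ring
  have q3 : (3 * r) ^ 3 = 27 * r ^ 3 := by ring
  have e2 : (s / 2) • ((2:ℝ) • w) = y := by rw [smul_smul, ← hsw]; congr 1; ring
  have e1' : s • (-w) = -y := by rw [smul_neg, hsw]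
  have e2' : (s / 2) • ((-2:ℝ) • w) = -y := by rw [smul_smul, ← hsw, ← neg_smul]; congr 1; ring
  have n2 : ‖(2:ℝ) • w‖ = 2 * ‖w‖ := by rw [norm_smul]; norm_num
  have n2' : ‖(-2:ℝ) • w‖ = 2 * ‖w‖ := by rw [norm_smul]; norm_num
  have p1 := Fpath h hL (τ := 0) (s := s) (w := w) le_rfl (by linarith) (by linarith) (by linarith)
    (by rw [hsw]; linarith)
  have p2 := Fpath h hL (τ := 0) (s := s) (w := -w) le_rfl (by linarith) (by linarith)
    (by rw [norm_neg]; linarith) (by rw [e1', norm_neg]; linarith)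
  have p3 := Fpath h hL (τ := s / 2) (s := s / 2) (w := (2:ℝ) • w) (by linarith) (by linarith)
    (by linarith) (by rw [n2]; linarith) (by rw [e2]; linarith)
  have p4 := Fpath h hL (τ := s / 2) (s := s / 2) (w := (-2:ℝ) • w) (by linarith) (by linarith)
    (by linarith) (by rw [n2']; linarith) (by rw [e2', norm_neg]; linarith)
  have m0 : ∀ y' : E d, ‖y'‖ ≤ r ^ 3 → ∀ τ : ℝ, τ ≤ 0 → s ≤ τ → gal zs τ y' 0 ∈ kCyl (3 * r) zs :=
    fun y' hy' τ h1 h2 => gal_mem.2 ⟨by linarith, h1, by linarith, by simpa⟩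
  have tr : ∀ y' : E d, ‖y'‖ ≤ r ^ 3 →
      |g (gal zs (s / 2) y' 0) - g (gal zs 0 y' 0) - s / 2 * Yop g zs| ≤ ε * (r ^ 2 / 2) := by
    intro y' hy'
    have := Fy h hL (τ := 0) (s := s / 2) (y := y') (u := 0) (m0 y' hy' 0 le_rfl (by linarith))
      (by rw [smul_zero, add_zero]; exact m0 y' hy' _ (by linarith) (by linarith))
    rw [smul_zero, add_zero, zero_add] at this
    rwa [abs_div, habs, abs_two] at this
  have t1 := tr y hy
  have t2 := tr (-y) (by rwa [norm_neg])
  have t3 := tr 0 (by simpa using hr3.le)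
  rw [hsw] at p1
  rw [e1', norm_neg] at p2
  rw [e2, n2, show s / 2 + s / 2 = s by ring] at p3
  rw [e2', n2', show s / 2 + s / 2 = s by ring] at p4
  rw [zero_add] at p1 p2
  rw [abs_div, habs, abs_two] at p3 p4
  rw [habs] at p1 p2
  have lin : ∀ (c : ℝ) (z : Z d), ∑ i, (c • w) i * pv g i z = c * ∑ i, w i * pv g i z := by
    intro c z
    rw [Finset.mul_sum]
    refine Finset.sum_congr rfl fun i _ => ?_
    simp; ring
  have linn : ∀ (z : Z d), ∑ i, (-w) i * pv g i z = - ∑ i, w i * pv g i z := by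
    intro z
    simp
  simp only [lin, linn] at p2 p3 p4
  have b1 : ε * (2 * ‖w‖ ^ 2 + 2 * r ^ 2) ≤ ε * (4 * r ^ 2) :=
    mul_le_mul_of_nonneg_left (by linarith) hε
  have b2 : ε * (2 * (2 * ‖w‖) ^ 2 + 2 * (r ^ 2 / 2)) ≤ ε * (9 * r ^ 2) :=
    mul_le_mul_of_nonneg_left (by nlinarith) hε
  replace p1 := p1.trans b1
  replace p2 := p2.trans b1
  replace p3 := p3.trans b2
  replace p4 := p4.trans b2
  rw [abs_le] at *
  constructor <;> linarith [p1.1, p1.2, p2.1, p2.2, p3.1, p3.2, p4.1, p4.2, t1.1, t1.2, t2.1, t2.2,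
    t3.1, t3.2]

lemma kCyl_trans {z z₁ z₀ : Z d} {ρ R : ℝ} (hρ : 0 < ρ) (hR : 0 < R) (h : z ∈ kCyl ρ z₁)
    (h1 : z₁ ∈ kCyl R z₀) : z ∈ kCyl (R + ρ) z₀ := by
  obtain ⟨a1, a2, a3, a4⟩ := h
  obtain ⟨b1, b2, b3, b4⟩ := h1
  refine ⟨by nlinarith, by linarith, ?_, ?_⟩
  · have e : z.2.1 - z₀.2.1 - (z.1 - z₀.1) • z₀.2.2 =
      (z.2.1 - z₁.2.1 - (z.1 - z₁.1) • z₁.2.2) + (z₁.2.1 - z₀.2.1 - (z₁.1 - z₀.1) • z₀.2.2)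
        + (z.1 - z₁.1) • (z₁.2.2 - z₀.2.2) := by module
    rw [e]
    have h3 : ‖(z.1 - z₁.1) • (z₁.2.2 - z₀.2.2)‖ ≤ ρ ^ 2 * R := by
      rw [norm_smul, Real.norm_eq_abs]
      refine mul_le_mul ?_ b4.le (norm_nonneg _) (by positivity)
      rw [abs_le]; constructor <;> nlinarith
    refine (norm_add₃_le).trans_lt ?_
    have : 0 < R ^ 2 * ρ := by positivity
    have : 0 < ρ ^ 2 * R := by positivity
    nlinarith
  · have e : z.2.2 - z₀.2.2 = (z.2.2 - z₁.2.2) + (z₁.2.2 - z₀.2.2) := by abel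
    rw [e]
    refine (norm_add_le _ _).trans_lt ?_
    linarith

lemma kCyl_mono {z₀ : Z d} {r R : ℝ} (hr : 0 < r) (h : r ≤ R) : kCyl r z₀ ⊆ kCyl R z₀ := by
  rintro z ⟨a1, a2, a3, a4⟩
  have h2 : r ^ 2 ≤ R ^ 2 := pow_le_pow_left₀ hr.le h 2
  have h3 : r ^ 3 ≤ R ^ 3 := pow_le_pow_left₀ hr.le h 3
  exact ⟨by linarith, a2, by linarith, by linarith⟩

lemma holder_le {β : ℝ} {Q : Set (Z d)} {f : Z d → ℝ} (hf : kHolder β Q f ≠ ⊤) {zs z : Z d} {r : ℝ}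
    (hzs : zs ∈ Q) (hr : 0 < r) (hQ : kCyl r zs ⊆ Q) (hz : z ∈ kCyl r zs) :
    |f z - f zs| ≤ (kHolder β Q f).toReal * r ^ β := by
  have : ENNReal.ofReal (|f z - f zs| / r ^ β) ≤ kHolder β Q f :=
    le_iSup₂_of_le zs hzs (le_iSup₂_of_le r hr (le_iSup_of_le hQ (le_iSup₂_of_le z hz le_rfl)))
  rw [ENNReal.ofReal_le_iff_le_toReal hf, div_le_iff₀ (Real.rpow_pos_of_pos hr _)] at this
  exact this

/-- bounds package, real-valued form of the right-hand side. -/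
structure Pack (g : Z d → ℝ) (α T : ℝ) (z₀ : Z d) : Prop where
  sup : ∀ z ∈ kCyl 2 z₀, |g z| ≤ T
  loc : ∀ zs ∈ kCyl (3/2) z₀, ∀ ρ, 0 < ρ → ρ ≤ 1/2 → LocBd g zs ρ (T * ρ ^ α)

lemma xinc {g : Z d → ℝ} (h : KinReg g Set.univ) {α T : ℝ} {z₀ : Z d} (hα0 : 0 < α) (hα1 : α < 1)
    (hT : 0 ≤ T) (hP : Pack g α T z₀) {K : ℝ} (hK : 4000 ≤ K)
    (hK2 : 54 ≤ K * (1 - 2 ^ ((2 + α) / 3 - 1))) {zs : Z d} (hzs : zs ∈ kCyl 1 z₀) (y : E d)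
    (hy : ‖y‖ ≤ 1 / 1000) :
    |g (gal zs 0 y 0) - g (gal zs 0 0 0)| ≤ K * T * ‖y‖ ^ ((2 + α) / 3) := by
  set β := (2 + α) / 3 with hβ
  have hb : ∀ y : E d, ‖y‖ ≤ 1 / 1000 → gal zs 0 y 0 ∈ kCyl (3/2) z₀ := by
    intro y hy
    have := kCyl_trans (ρ := 1/2) (R := 1) (by norm_num) (by norm_num)
      (gal_mem (zs := zs) (τ := 0) (y := y) (u := 0) |>.2
        ⟨by norm_num, le_rfl, by norm_num; linarith, by simp⟩) hzs
    norm_num at this ⊢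
    exact this
  have hsup : ∀ y : E d, ‖y‖ ≤ 1 / 1000 → |g (gal zs 0 y 0)| ≤ T := fun y hy =>
    hP.sup _ (kCyl_mono (by norm_num) (by norm_num) (hb y hy))
  have main : ∀ n : ℕ, ∀ y : E d, ‖y‖ ≤ 1 / 1000 → 1 / 1000 / 2 ^ (n + 1) ≤ ‖y‖ →
      |g (gal zs 0 y 0) - g (gal zs 0 0 0)| ≤ K * T * ‖y‖ ^ β := by
    intro n
    induction n with
    | zero =>
      intro y hy hy2
      have h1 := hsup y hy
      have h2 := hsup 0 (by simp)
      have h3 : ‖y‖ ≤ ‖y‖ ^ β := by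
        have := Real.rpow_le_rpow_of_exponent_ge (x := ‖y‖) (y := 1) (z := β)
          (by norm_num at hy2; linarith) (by linarith) (by rw [hβ]; linarith)
        simpa using this
      have h4 : 1 / 2000 ≤ ‖y‖ ^ β := by norm_num at hy2 ⊢; linarith
      have h5 : 2 ≤ K * ‖y‖ ^ β := by nlinarith
      have h6 : 2 * T ≤ K * T * ‖y‖ ^ β := by nlinarith
      rw [abs_le] at *
      constructor <;> linarith [h1.1, h1.2, h2.1, h2.2]
    | succ n ih =>
      intro y hy hy2
      by_cases hh : 1 / 1000 / 2 ^ (n + 1) ≤ ‖y‖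
      · exact ih y hy hh
      have hpos : 0 < ‖y‖ := lt_of_lt_of_le (by positivity) hy2
      push Not at hh
      have hn2 : ‖(2:ℝ) • y‖ = 2 * ‖y‖ := by rw [norm_smul]; norm_num
      have hsmall : 2 * ‖y‖ ≤ 1 / 1000 := by
        have : (1:ℝ) / 1000 / 2 ^ (n + 1) ≤ 1 / 1000 / 2 := by
          apply div_le_div_of_nonneg_left (by norm_num) (by norm_num)
          have := one_le_pow₀ (a := (2:ℝ)) (n := n) (by norm_num)
          rw [pow_succ]; linarith
        linarith
      have i1 := ih ((2:ℝ) • y) (by rw [hn2]; exact hsmall) (by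
        rw [hn2]
        have : (1:ℝ) / 1000 / 2 ^ (n + 1) = 2 * (1 / 1000 / 2 ^ (n + 1 + 1)) := by
          rw [pow_succ _ (n+1)]; field_simp
        linarith)
      set r : ℝ := ‖y‖ ^ (1 / 3 : ℝ) with hr
      have hr0 : 0 < r := Real.rpow_pos_of_pos hpos _
      have hr3 : r ^ 3 = ‖y‖ := by
        rw [hr, ← Real.rpow_natCast, ← Real.rpow_mul hpos.le]; norm_num
      have hr1 : r ≤ 1 / 10 := by
        by_contra hc
        push Not at hc
        have : (1/10:ℝ) ^ 3 < r ^ 3 := pow_lt_pow_left₀ hc (by norm_num) (by norm_num)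
        rw [hr3] at this; norm_num at this; linarith
      have hrβ : r ^ α * r ^ 2 = ‖y‖ ^ β := by
        rw [hr, ← Real.rpow_natCast, ← Real.rpow_mul hpos.le, ← Real.rpow_mul hpos.le,
          ← Real.rpow_add hpos, hβ]
        congr 1; push_cast; ring
      have sd := second_diff h hr0 (zs := gal zs 0 y 0) (y := y)
        (hP.loc _ (hb y hy) (3 * r) (by positivity) (by linarith)) hr3.ge
      have g1 : gal (gal zs 0 y 0) 0 y 0 = gal zs 0 ((2:ℝ) • y) 0 := by
        refine Prod.ext ?_ (Prod.ext ?_ ?_) <;> simp [gal]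
        module
      have g2 : gal (gal zs 0 y 0) 0 (-y) 0 = gal zs 0 0 0 := by
        refine Prod.ext ?_ (Prod.ext ?_ ?_) <;> simp [gal]
      have g3 : gal (gal zs 0 y 0) 0 0 0 = gal zs 0 y 0 := by
        refine Prod.ext ?_ (Prod.ext ?_ ?_) <;> simp [gal]
      rw [g1, g2, g3] at sd
      have h3 : (3:ℝ) ^ α ≤ 3 := by
        have := Real.rpow_le_rpow_of_exponent_le (x := 3) (by norm_num) hα1.le
        simpa using this
      have hYpos : 0 ≤ T * ‖y‖ ^ β := by positivity
      have e1 : 36 * (T * (3 * r) ^ α) * r ^ 2 ≤ 108 * (T * ‖y‖ ^ β) := by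
        rw [Real.mul_rpow (by norm_num) hr0.le]
        have : 36 * (T * (3 ^ α * r ^ α)) * r ^ 2 = 36 * 3 ^ α * (T * ‖y‖ ^ β) := by
          rw [← hrβ]; ring
        rw [this]
        exact mul_le_mul_of_nonneg_right (by linarith) hYpos
      have e2 : ‖(2:ℝ) • y‖ ^ β = 2 * 2 ^ (β - 1) * ‖y‖ ^ β := by
        rw [hn2, Real.mul_rpow (by norm_num) hpos.le]
        congr 1
        rw [Real.rpow_sub (by norm_num), Real.rpow_one]; ring
      rw [e2] at i1
      have fin : 54 * (T * ‖y‖ ^ β) ≤ K * (1 - 2 ^ (β - 1)) * (T * ‖y‖ ^ β) :=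
        mul_le_mul_of_nonneg_right hK2 hYpos
      replace sd := sd.trans e1
      rw [abs_le] at *
      constructor <;> nlinarith [sd.1, sd.2, i1.1, i1.2]
  rcases eq_or_ne y 0 with rfl | hne
  · simp
    positivity
  · have hpos : 0 < ‖y‖ := norm_pos_iff.2 hne
    obtain ⟨n, hn⟩ := exists_pow_lt_of_lt_one hpos (show (1/2:ℝ) < 1 by norm_num)
    refine main n y hy (le_trans ?_ hn.le)
    rw [div_pow, one_pow, pow_succ]
    have : (0:ℝ) < 2 ^ n := by positivity
    rw [div_div]
    apply div_le_div_of_nonneg_left (by norm_num) this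
    nlinarith

lemma mk_pack {g : Z d → ℝ} {α : ℝ} {z₀ : Z d}
    (hW : kHolder α (kCyl 2 z₀) (Yop g) + (∑ i, ∑ j, kHolder α (kCyl 2 z₀) (pvv g i j))
    + supAbs (kCyl 2 z₀) g ≠ ⊤) :
    Pack g α (kHolder α (kCyl 2 z₀) (Yop g) + (∑ i, ∑ j, kHolder α (kCyl 2 z₀) (pvv g i j))
    + supAbs (kCyl 2 z₀) g).toReal z₀ := by
  set A := kHolder α (kCyl 2 z₀) (Yop g) with hA
  set B := ∑ i, ∑ j, kHolder α (kCyl 2 z₀) (pvv g i j) with hB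
  set S := supAbs (kCyl 2 z₀) g with hS
  obtain ⟨hAB, hSt⟩ := ENNReal.add_ne_top.1 hW
  obtain ⟨hAt, hBt⟩ := ENNReal.add_ne_top.1 hAB
  have hBi : ∀ i, ∑ j, kHolder α (kCyl 2 z₀) (pvv g i j) ≠ ⊤ := fun i =>
    (ENNReal.sum_ne_top.1 hBt) i (Finset.mem_univ i)
  have hBij : ∀ i j, kHolder α (kCyl 2 z₀) (pvv g i j) ≠ ⊤ := fun i j =>
    (ENNReal.sum_ne_top.1 (hBi i)) j (Finset.mem_univ j)
  rw [ENNReal.toReal_add hAB hSt, ENNReal.toReal_add hAt hBt]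
  have pA : 0 ≤ A.toReal := ENNReal.toReal_nonneg
  have pB : 0 ≤ B.toReal := ENNReal.toReal_nonneg
  have pS : 0 ≤ S.toReal := ENNReal.toReal_nonneg
  constructor
  · intro z hz
    have : ENNReal.ofReal |g z| ≤ S := le_iSup₂_of_le (f := fun z _ => ENNReal.ofReal |g z|) z hz le_rfl
    rw [ENNReal.ofReal_le_iff_le_toReal hSt] at this
    linarith
  · intro zs hzs ρ hρ hρ2 z hz
    have hsub : kCyl ρ zs ⊆ kCyl 2 z₀ := fun z' hz' =>
      kCyl_mono (by positivity) (by linarith) (kCyl_trans hρ (by norm_num) hz' hzs)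
    have hzs2 : zs ∈ kCyl 2 z₀ := kCyl_mono (by norm_num) (by norm_num) hzs
    have hρα : 0 ≤ ρ ^ α := (Real.rpow_pos_of_pos hρ _).le
    constructor
    · exact (holder_le hAt hzs2 hρ hsub hz).trans (mul_le_mul_of_nonneg_right (by linarith) hρα)
    · have hBe : B.toReal = ∑ i, ∑ j, (kHolder α (kCyl 2 z₀) (pvv g i j)).toReal := by
        rw [hB, ENNReal.toReal_sum (fun i _ => hBi i)]
        exact Finset.sum_congr rfl fun i _ => ENNReal.toReal_sum (fun j _ => hBij i j)
      refine le_trans (b := B.toReal * ρ ^ α) ?_ (mul_le_mul_of_nonneg_right (by linarith) hρα)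
      rw [hBe, Finset.sum_mul]
      refine Finset.sum_le_sum fun i _ => ?_
      rw [Finset.sum_mul]
      exact Finset.sum_le_sum fun j _ => holder_le (hBij i j) hzs2 hρ hsub hz

lemma poly_exists (z₁ : Z d) (c b : ℝ) (l : Fin d → ℝ) (N : Fin d → Fin d → ℝ) :
    ∃ (a : ℝ) (q : Fin d → ℝ), ∀ z : Z d, kpoly a b q N z =
      c + (z.1 - z₁.1) * b + ∑ i, (z.2.2 - z₁.2.2) i * l i
        + 1 / 2 * ∑ i, ∑ j, N i j * (z.2.2 - z₁.2.2) i * (z.2.2 - z₁.2.2) j := by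
  refine ⟨c - z₁.1 * b - ∑ i, z₁.2.2 i * l i + 1 / 2 * ∑ i, ∑ j, N i j * z₁.2.2 i * z₁.2.2 j,
    fun i => l i - 1 / 2 * ∑ j, N i j * z₁.2.2 j - 1 / 2 * ∑ j, N j i * z₁.2.2 j, fun z => ?_⟩
  have e1 : ∑ i, (z.2.2 - z₁.2.2) i * l i = ∑ i, l i * z.2.2 i - ∑ i, z₁.2.2 i * l i := by
    rw [← Finset.sum_sub_distrib]
    refine Finset.sum_congr rfl fun i _ => ?_
    simp; ring
  have e2 : ∑ i, ∑ j, N i j * (z.2.2 - z₁.2.2) i * (z.2.2 - z₁.2.2) j =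
      ∑ i, ∑ j, N i j * z.2.2 i * z.2.2 j - ∑ i, ∑ j, N i j * z.2.2 i * z₁.2.2 j
      - ∑ i, ∑ j, N i j * z₁.2.2 i * z.2.2 j + ∑ i, ∑ j, N i j * z₁.2.2 i * z₁.2.2 j := by
    simp only [← Finset.sum_sub_distrib, ← Finset.sum_add_distrib]
    refine Finset.sum_congr rfl fun i _ => Finset.sum_congr rfl fun j _ => ?_
    simp; ring
  have e3 : ∑ i, (l i - 1 / 2 * ∑ j, N i j * z₁.2.2 j - 1 / 2 * ∑ j, N j i * z₁.2.2 j) * z.2.2 i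
      = ∑ i, l i * z.2.2 i - 1 / 2 * ∑ i, ∑ j, N i j * z.2.2 i * z₁.2.2 j
        - 1 / 2 * ∑ i, ∑ j, N i j * z₁.2.2 i * z.2.2 j := by
    rw [Finset.sum_comm (f := fun i j => N i j * z₁.2.2 i * z.2.2 j)]
    simp only [Finset.mul_sum, ← Finset.sum_sub_distrib, sub_mul, Finset.sum_mul]
    refine Finset.sum_congr rfl fun i _ => ?_
    congr 1
    · congr 1
      exact Finset.sum_congr rfl fun j _ => by ring
    · exact Finset.sum_congr rfl fun j _ => by ring
  simp only [kpoly]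
  rw [e1, e2, e3]
  ring

lemma approx {g : Z d → ℝ} (h : KinReg g Set.univ) {α T : ℝ} {z₀ : Z d} (hα0 : 0 < α) (hα1 : α < 1)
    (hT : 0 ≤ T) (hP : Pack g α T z₀) {K : ℝ} (hK : 4000 ≤ K)
    (hK2 : 54 ≤ K * (1 - 2 ^ ((2 + α) / 3 - 1))) {z₁ : Z d} (hz₁ : z₁ ∈ kCyl 1 z₀) {r : ℝ}
    (hr : 0 < r) (hsub : kCyl r z₁ ⊆ kCyl 1 z₀) :
    ∃ (a b : ℝ) (q : Fin d → ℝ) (M : Matrix (Fin d) (Fin d) ℝ), ∀ z ∈ kCyl r z₁,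
      |g z - kpoly a b q M z| ≤ (2 * K + 4) * T * r ^ (2 + α) := by
  rcases le_or_gt (1 / 20) r with hbig | hsmall
  · refine ⟨0, 0, 0, 0, fun z hz => ?_⟩
    have h1 := hP.sup z (kCyl_mono (by norm_num) (by norm_num) (hsub hz))
    have h2 : (1 / 20 : ℝ) ^ (3:ℝ) ≤ r ^ (2 + α) :=
      (Real.rpow_le_rpow_of_exponent_ge (by norm_num) (by norm_num) (by linarith)).trans
        (Real.rpow_le_rpow (by norm_num) hbig (by linarith))
    have h3 : (1 / 20 : ℝ) ^ (3:ℝ) = 1 / 8000 := by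
      rw [show (3:ℝ) = ((3:ℕ):ℝ) by norm_num, Real.rpow_natCast]; norm_num
    rw [h3] at h2
    have h4 : 1 ≤ (2 * K + 4) * r ^ (2 + α) := by nlinarith
    simp [kpoly]
    nlinarith
  · obtain ⟨a, q, hp⟩ := poly_exists z₁ (g z₁) (Yop g z₁) (fun i => pv g i z₁)
      (fun i j => pvv g i j z₁)
    refine ⟨a, Yop g z₁, q, fun i j => pvv g i j z₁, fun z hz => ?_⟩
    rw [hp]
    set τ := z.1 - z₁.1 with hτ
    set u := z.2.2 - z₁.2.2 with hu
    set y := z.2.1 - z₁.2.1 - (z.1 - z₁.1) • z₁.2.2 with hy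
    have hz' : gal z₁ τ y u ∈ kCyl r z₁ := by rw [hτ, hu, hy, ← gal_surj]; exact hz
    obtain ⟨m1, m2, m3, m4⟩ := gal_mem.1 hz'
    have hz3 : z₁ ∈ kCyl (3 / 2) z₀ := kCyl_mono (by norm_num) (by norm_num) hz₁
    have hL := hP.loc z₁ hz3 (2 * r) (by linarith) (by linarith)
    have hr2 : 0 < r ^ 2 := by positivity
    have hr3 : 0 < r ^ 3 := by positivity
    have q2 : (2 * r) ^ 2 = 4 * r ^ 2 := by ring
    have q3 : (2 * r) ^ 3 = 8 * r ^ 3 := by ring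
    have hτabs : |τ| ≤ r ^ 2 := by rw [abs_le]; constructor <;> linarith
    have hτu : ‖τ • u‖ ≤ r ^ 3 := by
      rw [norm_smul, Real.norm_eq_abs, show r ^ 3 = r ^ 2 * r by ring]
      exact mul_le_mul hτabs m4.le (norm_nonneg _) hr2.le
    have a1 := Fv h hL (τ := 0) (y := 0) (w := u)
      (gal_mem.2 ⟨by linarith, le_rfl, by rw [norm_zero]; positivity, by linarith⟩)
    have a2 := Fy h hL (τ := 0) (s := τ) (y := 0) (u := u)
      (gal_mem.2 ⟨by linarith, le_rfl, by rw [norm_zero]; positivity, by linarith⟩)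
      (gal_mem.2 ⟨by linarith, by linarith, by rw [zero_add]; linarith, by linarith⟩)
    have hyn : ‖τ • u - y‖ ≤ 2 * r ^ 3 := (norm_sub_le _ _).trans (by linarith)
    have hr3s : r ^ 3 ≤ (1 / 20) ^ 3 := pow_le_pow_left₀ hr.le hsmall.le 3
    have a3 := xinc h hα0 hα1 hT hP hK hK2 (hsub hz) (τ • u - y)
      (hyn.trans (by norm_num at hr3s; linarith))
    have g1 : gal z 0 (τ • u - y) 0 = gal z₁ τ (τ • u) u := by
      rw [gal_surj z₁ z, ← hτ, ← hu, ← hy]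
      refine Prod.ext ?_ (Prod.ext ?_ ?_)
      · simp [gal]
      · simp only [gal, zero_smul]; abel
      · simp [gal]
    have g2 : gal z 0 0 0 = z := by simp [gal]
    have g3 : gal z₁ 0 0 0 = z₁ := by simp [gal]
    rw [g1, g2] at a3
    rw [g3] at a1
    rw [zero_add, zero_add] at a2
    have hrα : 0 < r ^ α := Real.rpow_pos_of_pos hr _
    have hrr : r ^ (2 + α) = r ^ 2 * r ^ α := by
      rw [Real.rpow_add hr, Real.rpow_two]
    have h2α : (2 * r) ^ α ≤ 2 * r ^ α := by
      rw [Real.mul_rpow (by norm_num) hr.le]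
      refine mul_le_mul_of_nonneg_right ?_ hrα.le
      have := Real.rpow_le_rpow_of_exponent_le (x := 2) (by norm_num) hα1.le
      simpa using this
    have hε : 0 ≤ T * (2 * r) ^ α := by positivity
    have hun : ‖u‖ ^ 2 ≤ r ^ 2 := pow_le_pow_left₀ (norm_nonneg _) m4.le 2
    have c0 : T * (2 * r) ^ α * r ^ 2 ≤ 2 * (T * r ^ (2 + α)) := by
      rw [hrr]
      have : T * (2 * r) ^ α ≤ T * (2 * r ^ α) := mul_le_mul_of_nonneg_left h2α hT
      nlinarith
    have c1 : T * (2 * r) ^ α * ‖u‖ ^ 2 ≤ 2 * (T * r ^ (2 + α)) :=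
      (mul_le_mul_of_nonneg_left hun hε).trans c0
    have c2 : T * (2 * r) ^ α * |τ| ≤ 2 * (T * r ^ (2 + α)) :=
      (mul_le_mul_of_nonneg_left hτabs hε).trans c0
    have c3 : K * T * ‖τ • u - y‖ ^ ((2 + α) / 3) ≤ 2 * K * (T * r ^ (2 + α)) := by
      have : ‖τ • u - y‖ ^ ((2 + α) / 3) ≤ 2 * r ^ (2 + α) := by
        refine (Real.rpow_le_rpow (norm_nonneg _) hyn (by linarith)).trans ?_
        rw [Real.mul_rpow (by norm_num) hr3.le, ← Real.rpow_natCast, ← Real.rpow_mul hr.le]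
        rw [show ((3:ℕ):ℝ) * ((2 + α) / 3) = 2 + α by push_cast; ring]
        refine mul_le_mul_of_nonneg_right ?_ (Real.rpow_pos_of_pos hr _).le
        have := Real.rpow_le_rpow_of_exponent_le (x := 2) (y := (2 + α) / 3) (z := 1) (by norm_num)
          (by linarith)
        simpa using this
      have hKT : 0 ≤ K * T := mul_nonneg (by linarith) hT
      nlinarith [mul_le_mul_of_nonneg_left this hKT]
    replace a1 := a1.trans c1
    replace a2 := a2.trans c2
    replace a3 := a3.trans c3
    clear_value τ u y
    rw [abs_le] at a1 a2 a3 ⊢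
    constructor <;> linarith [a1.1, a1.2, a2.1, a2.2, a3.1, a3.2]

/-- Equivalence of the kinetic `2+α` Hölder seminorm with the Hölder continuity of the
highest kinetic-order derivatives: `‖g‖_{L^∞(Q₁(z₀))} + [g]_{C_ℓ^{2+α}(Q₁(z₀))}
≤ C ([∂_t g + v·∇_x g]_{C_ℓ^α(Q₂(z₀))} + Σ_{i,j} [∂²_{vᵢvⱼ} g]_{C_ℓ^α(Q₂(z₀))}
+ ‖g‖_{L^∞(Q₂(z₀))})` with `C = C(d, α)`. -/
theorem local_seminorm_equivalence
    (d : ℕ) (hd : 1 ≤ d) (α : ℝ) (hα0 : 0 < α) (hα1 : α < 1) :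
    ∃ C : ℝ, 0 < C ∧
      ∀ g : Z d → ℝ, KinReg g Set.univ → kSemi2 α Set.univ g < ⊤ →
        ∀ z₀ : Z d,
          supAbs (kCyl 1 z₀) g + kSemi2 α (kCyl 1 z₀) g
            ≤ ENNReal.ofReal C *
              (kHolder α (kCyl 2 z₀) (Yop g)
                + (∑ i, ∑ j, kHolder α (kCyl 2 z₀) (pvv g i j))
                + supAbs (kCyl 2 z₀) g) := by
  set β := (2 + α) / 3 with hβ
  have hlt : (2:ℝ) ^ (β - 1) < 1 := Real.rpow_lt_one_of_one_lt_of_neg (by norm_num) (by rw [hβ]; linarith)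
  set K : ℝ := max 4000 (54 / (1 - 2 ^ (β - 1))) with hKdef
  have hK : 4000 ≤ K := le_max_left _ _
  have hK2 : 54 ≤ K * (1 - 2 ^ (β - 1)) := by
    rw [← div_le_iff₀ (by linarith)]; exact le_max_right _ _
  refine ⟨2 * K + 5, by linarith, ?_⟩
  intro g hg _ z₀
  set W := kHolder α (kCyl 2 z₀) (Yop g) + (∑ i, ∑ j, kHolder α (kCyl 2 z₀) (pvv g i j))
    + supAbs (kCyl 2 z₀) g with hW
  by_cases hWt : W = ⊤
  · rw [hWt, ENNReal.mul_top (by simp; linarith)]; exact le_top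
  set T := W.toReal with hTdef
  have hT : 0 ≤ T := ENNReal.toReal_nonneg
  have hWT : W = ENNReal.ofReal T := (ENNReal.ofReal_toReal hWt).symm
  have hP : Pack g α T z₀ := mk_pack hWt
  have hS : supAbs (kCyl 1 z₀) g ≤ ENNReal.ofReal T :=
    iSup₂_le fun z hz => ENNReal.ofReal_le_ofReal
      (hP.sup z (kCyl_mono (by norm_num) (by norm_num) hz))
  have hSemi : kSemi2 α (kCyl 1 z₀) g ≤ ENNReal.ofReal ((2 * K + 4) * T) := by
    refine iSup₂_le fun z₁ hz₁ => iSup₂_le fun r hr => iSup_le fun hsub => ?_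
    obtain ⟨a, b, q, M, hp⟩ := approx hg hα0 hα1 hT hP hK hK2 hz₁ hr hsub
    refine ENNReal.div_le_of_le_mul ?_
    rw [← ENNReal.ofReal_mul (mul_nonneg (by linarith) hT)]
    refine iInf_le_of_le a (iInf_le_of_le b (iInf_le_of_le q (iInf_le_of_le M ?_)))
    exact iSup₂_le fun z hz => ENNReal.ofReal_le_ofReal (hp z hz)
  rw [hWT, ← ENNReal.ofReal_mul (by linarith)]
  calc _ ≤ ENNReal.ofReal T + ENNReal.ofReal ((2 * K + 4) * T) := add_le_add hS hSemi
    _ = _ := by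
      rw [← ENNReal.ofReal_add hT (mul_nonneg (by linarith) hT)]; congr 1; ring
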